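/- Let C > 0, α > 0, ε ∈ (0,1), and let d ≥ 2 be an integer. Set δ = 2^{-7}·α·ε². Then there exists a constant c > 0 (depending only on d, C, α and ε) such that for every positive integer N, every finite (d+1)-regular simple graph G satisfying sup_{x∈V} ‖S_n δ_x‖_∞ ≤ C·d^{-α n} for all integers 0 ≤ n ≤ N, every function φ : V → ℝ with T_d φ = λ φ for some λ ∈ ℝ and ‖φ‖_2 = 1, and every subset E ⊆ V with Σ_{x∈E} |φ(x)|² > ε, the set E satisfies |E| ≥ c·d^{δN}. -/

import Mathlib

/-!
Write `f = φ 1_E`, `μ = ∑_{x ∈ E} φ(x)²`, and let `C_n(2 cos t) = 2 cos (n t)`,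
`S_n(2 cos t) = sin ((n+1) t) / sin t` be the rescaled Chebyshev polynomials. The proof tests the
eigenfunction against the Fejér kernel, written as the square of `h = S_r ∘ C_M`:

  `h² = (r + 1) + ∑_{s ≤ r} ∑_{1 ≤ j ≤ s} C_{2jM}`   (`cheb_fejer_comp`).

Since `h(T_d)` is symmetric, Cauchy–Schwarz gives `h(λ)² μ² ≤ ⟨f, h²(T_d) f⟩` (`eigen_sq_le`).

* Lower bound for `h(λ)²`: a multiple `M = m k` with `1 ≤ k ≤ 7 r` is chosen so that
  `C_{2jM}(λ) ≥ 1` for all `1 ≤ j ≤ r` (`exists_frequency`), by Dirichlet's approximation theorem if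
  `λ = 2 cos θ`, and for free if `|λ| > 2`. No lower bound on other eigenvalues is needed.
* Upper bound for the right-hand side: `S_n = p_n + d⁻¹ S_{n-2}` and `C_n = S_n - S_{n-2}`, so the
  decay of the entries of the sphere operators passes to the operators `C_n(T_d)` at any rate `ρ`
  with `d ρ² > 1` (`cheb_C_bound`). Every `C_{2jM}(T_d)` thus has entries `O(ρ^{2m})`, and
  `⟨f, C_{2jM}(T_d) f⟩` is at most this bound times `|E| μ`.

With `r = ⌈2/ε⌉` the two bounds combine to `2 ε ≤ O(r ρ^{2m}) |E|` (`card_lower_bound`). All the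
frequencies stay below `N` for `m = ⌊N / (14 r²)⌋`, and `14 r² ≤ 126 / ε²`. With `ρ = d^{-α/2}` this
yields `|E| ≥ c d^{α ε² N / 128}` whenever `α < 1`.

For `α ≥ 1` the hypothesis forces `N` to be bounded: `d^{n/2} p_n(T_d)` is a nonzero integer matrix,
so some entry of `p_n(T_d)` is at least `d^{-n/2}` (`exists_lpNorm_ge`).
-/

open Polynomial Finset ENNReal Real

/-- The normalized adjacency operator `T_d` of a locally finite graph:
`(T_d f)(x) = d^{-1/2} * ∑_{y ~ x} f(y)`. -/
noncomputable def Td (d : ℕ) {V : Type*} (G : SimpleGraph V) [∀ v, Fintype (G.neighborSet v)] :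
    Module.End ℝ (V → ℝ) :=
  { toFun := fun f x => (Real.sqrt d)⁻¹ * ∑ y ∈ G.neighborFinset x, f y
    map_add' := by intro f g; funext x; simp [Finset.sum_add_distrib, mul_add]
    map_smul' := by
      intro c f; funext x; simp [Finset.mul_sum]
      exact Finset.sum_congr rfl fun y _ => by ring }

/-- The Geronimus-type polynomials for the `(d+1)`-regular tree:
`p 0 = 1`, `p 1 = X`, `p 2 = X^2 - (d+1)/d`, `p (n+1) = X * p n - p (n-1)` for `n ≥ 2`.
Substituting `T_d` yields the normalized sphere operators `S_n`. -/
noncomputable def geron (d : ℕ) : ℕ → Polynomial ℝ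
  | 0 => 1
  | 1 => X
  | 2 => X ^ 2 - C (((d : ℝ) + 1) / d)
  | n + 3 => X * geron d (n + 2) - geron d (n + 1)

/-- The `ℓ^p` norm of a function on a finite set (with respect to counting measure),
for `p ∈ [1, ∞]`. -/
noncomputable def lpNorm {V : Type*} [Fintype V] (p : ℝ≥0∞) (f : V → ℝ) : ℝ :=
  if p = ∞ then ⨆ x, |f x| else (∑ x, |f x| ^ p.toReal) ^ (1 / p.toReal)

/-! ### The Fejér kernel as a square of a Chebyshev polynomial -/

/-- The doubling formulas
`S_{2n+1} = S_n (S_{n+1} - S_{n-1})` and `S_{2n+2} = S_{n+1}² - S_n²`, the former with `S_{n-1}`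
written as `X S_n - S_{n+1}`. -/
theorem cheb_S_double (n : ℕ) :
    Chebyshev.S ℝ (2 * (n : ℤ) + 1) = Chebyshev.S ℝ n *
        (2 * Chebyshev.S ℝ ((n : ℤ) + 1) - X * Chebyshev.S ℝ n) ∧
      Chebyshev.S ℝ (2 * (n : ℤ) + 2) =
        Chebyshev.S ℝ ((n : ℤ) + 1) ^ 2 - Chebyshev.S ℝ n ^ 2 := by
  induction n with
  | zero => constructor <;> simp [Chebyshev.S_two]; ring
  | succ n ih =>
    obtain ⟨h1, h2⟩ := ih
    have e2 := Chebyshev.S_add_two ℝ (n : ℤ)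
    have e3 := Chebyshev.S_add_two ℝ (2 * (n : ℤ) + 1)
    have e4 := Chebyshev.S_add_two ℝ (2 * (n : ℤ) + 2)
    have i1 : (2 * ((n + 1 : ℕ) : ℤ) + 1) = 2 * (n : ℤ) + 1 + 2 := by push_cast; ring
    have i2 : (2 * ((n + 1 : ℕ) : ℤ) + 2) = 2 * (n : ℤ) + 2 + 2 := by push_cast; ring
    have i3 : (((n + 1 : ℕ) : ℤ) + 1) = (n : ℤ) + 2 := by push_cast; ring
    have i4 : ((n + 1 : ℕ) : ℤ) = (n : ℤ) + 1 := by push_cast; ring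
    have i5 : 2 * (n : ℤ) + 1 + 1 = 2 * (n : ℤ) + 2 := by ring
    have i6 : 2 * (n : ℤ) + 2 + 1 = 2 * (n : ℤ) + 1 + 2 := by ring
    rw [i1, i2, i3, i4]
    rw [i5] at e3
    rw [i6] at e4
    rw [e4, e3, h2, h1, e2]
    constructor <;> ring

theorem cheb_C_eq_S_sub (n : ℤ) :
    Chebyshev.C ℝ (n + 2) = Chebyshev.S ℝ (n + 2) - Chebyshev.S ℝ n := by
  have h1 := Chebyshev.C_eq_S_sub_X_mul_S ℝ (n + 2)
  have h2 := Chebyshev.S_add_two ℝ n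
  have i : n + 2 - 1 = n + 1 := by ring
  rw [i] at h1
  linear_combination h1 + h2

theorem cheb_S_even (s : ℕ) :
    Chebyshev.S ℝ (2 * (s : ℤ)) =
      1 + ∑ j ∈ range s, Chebyshev.C ℝ (2 * ((j : ℤ) + 1)) := by
  induction s with
  | zero => simp
  | succ s ih =>
    rw [sum_range_succ, ← add_assoc, ← ih]
    have := cheb_C_eq_S_sub (2 * (s : ℤ))
    push_cast
    rw [show 2 * ((s : ℤ) + 1) = 2 * s + 2 by ring]
    linear_combination -this

/-- The Fejér kernel as a square: with `X = 2 cos t` this reads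
`(sin ((n+1) t) / sin t)² = (n+1) + ∑_{s ≤ n} ∑_{1 ≤ j ≤ s} 2 cos (2 j t)`. -/
theorem cheb_fejer (n : ℕ) :
    Chebyshev.S ℝ n ^ 2 = ((n : ℝ[X]) + 1) +
      ∑ s ∈ range (n + 1), ∑ j ∈ range s, Chebyshev.C ℝ (2 * ((j : ℤ) + 1)) := by
  induction n with
  | zero => simp
  | succ n ih =>
    rw [sum_range_succ]
    have h1 := (cheb_S_double n).2
    have h2 := cheb_S_even (n + 1)
    push_cast at h2 ⊢
    rw [show 2 * ((n : ℤ) + 1) = 2 * n + 2 by ring] at h2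
    linear_combination ih - h1 + h2

/-- The Fejér kernel in the variable `C_m`: all the frequencies are multiples of `2 m`. -/
theorem cheb_fejer_comp (n : ℕ) (m : ℤ) :
    ((Chebyshev.S ℝ n).comp (Chebyshev.C ℝ m)) ^ 2 = ((n : ℝ[X]) + 1) +
      ∑ s ∈ range (n + 1), ∑ j ∈ range s, Chebyshev.C ℝ (2 * ((j : ℤ) + 1) * m) := by
  have h := congrArg (fun p => p.comp (Chebyshev.C ℝ m)) (cheb_fejer n)
  simp only [pow_comp, add_comp, one_comp, natCast_comp, Polynomial.sum_comp] at h
  rw [h]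
  simp only [Chebyshev.C_mul]

/-! ### Choice of the frequency -/

theorem two_le_abs_cheb_C (n : ℤ) {x : ℝ} (hx : 2 ≤ |x|) :
    2 ≤ |(Chebyshev.C ℝ n).eval x| := by
  have h := congrArg (fun p => p.eval (x / 2)) (Chebyshev.C_comp_two_mul_X ℝ n)
  simp only [eval_comp, eval_mul, eval_ofNat, eval_X] at h
  rw [show 2 * (x / 2) = x by ring] at h
  have h1 := Chebyshev.one_le_abs_eval_T_real n (x := x / 2)
    (by rw [abs_div, abs_of_pos (two_pos : (0 : ℝ) < 2)]; linarith)
  rw [h, abs_mul, abs_of_pos (two_pos : (0 : ℝ) < 2)]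
  linarith

/-- A multiple `m k` of `m`, with `k` bounded in terms of `r` only, at which all the terms of the Fejér
kernel are at least `1`: for `|lam| ≤ 2` it comes from Dirichlet's approximation theorem, and
for `|lam| > 2` every even frequency works. -/
theorem exists_frequency (lam : ℝ) (r : ℕ) (hr : 0 < r) (m : ℕ) :
    ∃ k : ℕ, 0 < k ∧ k ≤ 7 * r ∧ ∀ j < r,
      1 ≤ (Chebyshev.C ℝ (2 * ((j : ℤ) + 1) * ((m * k : ℕ) : ℤ))).eval lam := by
  rcases le_or_gt |lam| 2 with h | h
  · set θ := arccos (lam / 2) with hθ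
    have hlam : lam = 2 * cos θ := by
      rw [hθ, cos_arccos] <;> linarith [(abs_le.mp h).1, (abs_le.mp h).2]
    obtain ⟨k, hk0, hk, hkr⟩ := Real.exists_nat_abs_mul_sub_round_le
      (2 * m * θ / (2 * π)) (n := 7 * r) (by omega)
    refine ⟨k, hk0, hk, fun j hj => ?_⟩
    rw [hlam, Chebyshev.C_two_mul_real_cos]
    set z : ℤ := round ((k : ℝ) * (2 * m * θ / (2 * π)))
    set e : ℝ := (k : ℝ) * (2 * m * θ / (2 * π)) - z with he
    have hpi := Real.pi_pos
    have hpi' := Real.pi_lt_d2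
    have harg : ((2 * ((j : ℤ) + 1) * ((m * k : ℕ) : ℤ) : ℤ) : ℝ) * θ
        = ((j : ℝ) + 1) * (2 * π * e) + (((j : ℤ) + 1) * z : ℤ) * (2 * π) := by
      rw [he]; push_cast; field_simp; ring
    rw [harg, Real.cos_add_int_mul_two_pi]
    have hrpos : (0 : ℝ) < r := by exact_mod_cast hr
    have hjr : (j : ℝ) + 1 ≤ r := by exact_mod_cast hj
    have hx : |((j : ℝ) + 1) * (2 * π * e)| ≤ 1 := by
      rw [abs_mul, abs_mul, abs_of_pos (by positivity : (0 : ℝ) < (j : ℝ) + 1),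
        abs_of_pos (by positivity : (0 : ℝ) < 2 * π)]
      calc ((j : ℝ) + 1) * (2 * π * |e|)
          ≤ r * (2 * 3.15 * (1 / (((7 * r : ℕ) : ℝ) + 1))) := by gcongr
        _ ≤ 1 := by
          push_cast
          rw [mul_one_div, mul_div_assoc', div_le_one (by positivity)]
          linarith
    have := Real.one_sub_sq_div_two_le_cos (x := ((j : ℝ) + 1) * (2 * π * e))
    have hsq := (sq_le_one_iff_abs_le_one _).2 hx
    linarith
  · refine ⟨1, one_pos, by omega, fun j _ => ?_⟩
    have h2 := two_le_abs_cheb_C (((j : ℤ) + 1) * ((m * 1 : ℕ) : ℤ)) h.le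
    rw [mul_assoc, Chebyshev.C_mul, eval_comp, Chebyshev.C_two]
    simp only [eval_sub, eval_pow, eval_X, eval_ofNat]
    nlinarith [sq_abs ((Chebyshev.C ℝ (((j : ℤ) + 1) * ((m * 1 : ℕ) : ℤ))).eval lam)]

/-! ### Sphere polynomials and Chebyshev polynomials -/

theorem cheb_S_geron (d : ℕ) (hd : 0 < d) (n : ℕ) :
    Chebyshev.S ℝ ((n : ℤ) + 2) = geron d (n + 2) + C ((d : ℝ)⁻¹) * Chebyshev.S ℝ n := by
  have hd' : (d : ℝ) ≠ 0 := by positivity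
  induction n using Nat.strong_induction_on with
  | _ n ih =>
    match n, ih with
    | 0, _ =>
      have : ((d : ℝ) + 1) / d = 1 + (d : ℝ)⁻¹ := by field_simp
      simp [geron, Chebyshev.S_two, this]
      ring
    | 1, ih =>
      have h0 := ih 0 one_pos
      have e := Chebyshev.S_add_two ℝ 1
      simp only [Nat.cast_zero, zero_add, Chebyshev.S_zero] at h0
      norm_num at e ⊢
      rw [e, h0]
      simp [geron]
      ring
    | n + 2, ih =>
      have h0 := ih n (by omega)
      have h1 := ih (n + 1) (by omega)
      have e := Chebyshev.S_add_two ℝ ((n : ℤ) + 2)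
      have e2 := Chebyshev.S_add_two ℝ (n : ℤ)
      have hg : geron d (n + 2 + 2) = X * geron d (n + 1 + 2) - geron d (n + 2) := by
        simp only [geron]
      push_cast at h0 h1 ⊢
      rw [show (n : ℤ) + 1 + 2 = n + 2 + 1 by ring] at h1
      rw [hg, e, h1]
      linear_combination -h0 + C ((d : ℝ)⁻¹) * (-e2)

/-- `(d+1)/√d` is the eigenvalue of the constant functions. -/
theorem geron_eval_top (d : ℕ) (hd : 0 < d) (n : ℕ) :
    (geron d (n + 1)).eval ((√d)⁻¹ * (d + 1)) = (1 + (d : ℝ)⁻¹) * √d ^ (n + 1) := by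
  have hs : 0 < √(d : ℝ) := by positivity
  obtain ⟨t, ht, htd⟩ : ∃ t : ℝ, 0 < t ∧ (d : ℝ) = t ^ 2 := ⟨√d, hs, (sq_sqrt (by positivity)).symm⟩
  have hst : √(d : ℝ) = t := by rw [htd, sqrt_sq ht.le]
  induction n using Nat.strong_induction_on with
  | _ n ih =>
    match n, ih with
    | 0, _ => simp only [geron, eval_X, hst]; rw [htd]; field_simp; ring
    | 1, _ =>
      simp only [geron, eval_X, eval_sub, eval_pow, eval_C, hst]; rw [htd]
      field_simp; ring
    | n + 2, ih =>
      have h0 := ih n (by omega)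
      have h1 := ih (n + 1) (by omega)
      have hg : geron d (n + 2 + 1) = X * geron d (n + 1 + 1) - geron d (n + 1) := by
        simp only [geron]
      rw [hg, eval_sub, eval_mul, eval_X, h0, h1, hst]; rw [htd]
      field_simp; ring

/-- Exponential decay passes from the sphere polynomials to the Chebyshev polynomials `C_n`, for any
linear functional `L`; the hypothesis on `B` makes the geometric series in
`S_n = ∑_j d⁻ʲ p_{n-2j}` converge. -/
theorem cheb_C_bound (d : ℕ) (hd : 0 < d) (L : ℝ[X] →ₗ[ℝ] ℝ) (N : ℕ) (K B ρ : ℝ) (hρ : 0 < ρ)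
    (hB : 0 ≤ B) (hKB : K + B / (d * ρ ^ 2) ≤ B)
    (hL : ∀ n ≤ N, |L (geron d n)| ≤ K * ρ ^ n) (n : ℕ) (hn : n ≤ N) :
    |L (Chebyshev.C ℝ n)| ≤ B * (2 + (ρ ^ 2)⁻¹) * ρ ^ n := by
  have hd' : (0 : ℝ) < d := by positivity
  have hS : ∀ n ≤ N, |L (Chebyshev.S ℝ n)| ≤ B * ρ ^ n := by
    intro n
    induction n using Nat.strong_induction_on with
    | _ n ih =>
      have hKB' : K ≤ B := le_trans (le_add_of_nonneg_right (by positivity)) hKB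
      match n, ih with
      | 0, _ =>
        intro hn
        have := hL 0 hn
        simp only [geron, pow_zero, mul_one, Nat.cast_zero, Chebyshev.S_zero] at this ⊢
        linarith
      | 1, _ =>
        intro hn
        have := hL 1 hn
        simp only [geron, pow_one, Nat.cast_one, Chebyshev.S_one] at this ⊢
        exact this.trans (by gcongr)
      | n + 2, ih =>
        intro hn
        have h1 := hL (n + 2) hn
        have h2 := ih n (by omega) (by omega)
        push_cast
        rw [cheb_S_geron d hd n, map_add, ← smul_eq_C_mul, map_smul, smul_eq_mul]
        calc |L (geron d (n + 2)) + (d : ℝ)⁻¹ * L (Chebyshev.S ℝ n)|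
            ≤ |L (geron d (n + 2))| + (d : ℝ)⁻¹ * |L (Chebyshev.S ℝ n)| := by
              refine (abs_add_le _ _).trans_eq ?_
              rw [abs_mul, abs_of_pos (inv_pos.2 hd')]
          _ ≤ K * ρ ^ (n + 2) + (d : ℝ)⁻¹ * (B * ρ ^ n) := by gcongr
          _ = (K + B / (d * ρ ^ 2)) * ρ ^ (n + 2) := by field_simp; ring
          _ ≤ B * ρ ^ (n + 2) := by gcongr
  match n, hn with
  | 0, hn =>
    have h : |L 1| ≤ B := by simpa using hS 0 hn
    have h2 : (Chebyshev.C ℝ ((0 : ℕ) : ℤ)) = (2 : ℝ) • 1 := by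
      rw [smul_eq_C_mul]; simp; rfl
    rw [h2, map_smul, smul_eq_mul, abs_mul, abs_two, pow_zero, mul_one, mul_add]
    have : 0 ≤ B * (ρ ^ 2)⁻¹ := by positivity
    linarith
  | 1, hn =>
    have h := hS 1 hn
    simp only [Nat.cast_one, Chebyshev.C_one, Chebyshev.S_one] at h ⊢
    refine h.trans ?_
    gcongr
    exact le_mul_of_one_le_right hB (by linarith [inv_pos.2 (pow_pos hρ 2)])
  | n + 2, hn =>
    have h := hS (n + 2) hn
    have h' := hS n (by omega)
    push_cast at h ⊢
    rw [cheb_C_eq_S_sub, map_sub]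
    calc |L (Chebyshev.S ℝ ((n : ℤ) + 2)) - L (Chebyshev.S ℝ n)|
        ≤ B * ρ ^ (n + 2) + B * ρ ^ n := (abs_sub _ _).trans (add_le_add h h')
      _ = B * (1 + (ρ ^ 2)⁻¹) * ρ ^ (n + 2) := by field_simp; ring
      _ ≤ _ := by gcongr; norm_num

/-! ### Polynomials in the adjacency operator -/

theorem abs_le_lpNorm_top {V : Type} [Fintype V] (f : V → ℝ) (z : V) : |f z| ≤ lpNorm ∞ f := by
  rw [lpNorm, if_pos rfl]
  exact le_ciSup (f := fun x => |f x|) (Set.finite_range _).bddAbove z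

theorem sum_sq_of_lpNorm_two {V : Type} [Fintype V] {φ : V → ℝ} (h : lpNorm 2 φ = 1) : ∑ x, φ x ^ 2 = 1 := by
  rw [lpNorm, if_neg (by simp)] at h
  simp only [ENNReal.toReal_ofNat, Real.rpow_two, sq_abs] at h
  rw [← Real.sqrt_eq_rpow, Real.sqrt_eq_one] at h
  exact h

/-- The arithmetic of `card_lower_bound`: `h` stands for the squared eigenvalue, `q` for the
quadratic form, `e` for `|E|`, and `D` for the number of oscillating terms of the Fejér kernel. -/
theorem card_arith (ε : ℝ) (hε : 0 < ε) (μ : ℝ) (hμ : ε < μ) (r : ℝ) (hr0 : 0 ≤ r) (hr : 2 ≤ r * ε)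
    (D : ℝ) (hD : 2 * D = r * (r + 1)) (M e h q : ℝ) (hlow : r + 1 + D ≤ h) (key : h * μ ^ 2 ≤ q)
    (hup : q ≤ (r + 1) * μ + D * (M * e * μ)) : 2 * ε ≤ r * M * e := by
  have hDe : D = r * (r + 1) / 2 := by linarith
  have hμ0 : 0 < μ := hε.trans hμ
  have h1 : (r + 1 + D) * μ ^ 2 ≤ ((r + 1) + D * (M * e)) * μ := by
    calc _ ≤ _ := mul_le_mul_of_nonneg_right hlow (sq_nonneg μ)
      _ ≤ _ := key
      _ ≤ _ := hup
      _ = _ := by ring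
  have h2 : (r + 1 + D) * μ ≤ (r + 1) + D * (M * e) := by
    refine le_of_mul_le_mul_right ?_ hμ0
    calc _ = (r + 1 + D) * μ ^ 2 := by ring
      _ ≤ _ := h1
  subst hDe
  have h3 := (mul_le_mul_of_nonneg_left hμ.le (by positivity)).trans h2
  have h4 : (r + 1) * (2 * ε) ≤ (r + 1) * (r * M * e) := by
    nlinarith
  exact le_of_mul_le_mul_left h4 (by positivity)

section Graph

variable {V : Type} [Fintype V] (G : SimpleGraph V) [DecidableRel G.Adj] (d : ℕ)

theorem Td_apply (f : V → ℝ) (x : V) : Td d G f x = (√d)⁻¹ * ∑ y ∈ G.neighborFinset x, f y := rfl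

theorem Td_symm (f g : V → ℝ) : ∑ z, f z * Td d G g z = ∑ z, Td d G f z * g z := by
  have h : ∀ f : V → ℝ, ∀ x, Td d G f x = (√d)⁻¹ * ∑ y, if G.Adj x y then f y else 0 := by
    intro f x
    rw [Td_apply, ← Finset.sum_filter]
    congr 2
    ext y; simp
  simp only [h, Finset.mul_sum, Finset.sum_mul]
  rw [Finset.sum_comm]
  refine Finset.sum_congr rfl fun x _ => Finset.sum_congr rfl fun y _ => ?_
  simp only [G.adj_comm y x]
  split_ifs <;> ring

theorem aeval_Td_symm (p : ℝ[X]) (f g : V → ℝ) :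
    ∑ z, f z * aeval (Td d G) p g z = ∑ z, aeval (Td d G) p f z * g z := by
  induction p using Polynomial.induction_on generalizing f g with
  | C a =>
    simp only [aeval_C, Module.algebraMap_end_apply, Pi.smul_apply, smul_eq_mul]
    exact Finset.sum_congr rfl fun _ _ => by ring
  | add p q hp hq =>
    simp only [map_add, LinearMap.add_apply, Pi.add_apply, mul_add, add_mul,
      Finset.sum_add_distrib, hp, hq]
  | monomial n a ih =>
    have e1 : C a * X ^ (n + 1) = (C a * X ^ n) * X := by ring
    have e2 : (C a * X ^ n) * X = X * (C a * X ^ n) := by ring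
    rw [e1]
    conv_rhs => rw [e2]
    simp only [map_mul (aeval (Td d G)) (C a * X ^ n) X, map_mul (aeval (Td d G)) X, aeval_X,
      Module.End.mul_apply]
    rw [ih, Td_symm]

theorem aeval_Td_eigen (p : ℝ[X]) {φ : V → ℝ} {lam : ℝ} (h : Td d G φ = lam • φ) :
    aeval (Td d G) p φ = p.eval lam • φ := by
  induction p using Polynomial.induction_on with
  | C a => simp [Module.algebraMap_end_apply]
  | add p q hp hq => simp [hp, hq, add_smul]
  | monomial n a ih =>
    rw [show C a * X ^ (n + 1) = (C a * X ^ n) * X by ring, map_mul, aeval_X, Module.End.mul_apply,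
      h, map_smul, ih, eval_mul (p := C a * X ^ n), eval_X, smul_smul, mul_comm]

/-- `d^{n/2} p_n(T_d)` has integer matrix entries. -/
theorem geron_integral (hd : 0 < d) (f : V → ℤ) (n : ℕ) :
    ∃ g : V → ℤ, ∀ z, √d ^ n * aeval (Td d G) (geron d n) (fun y => (f y : ℝ)) z = g z := by
  have hs : √(d : ℝ) ≠ 0 := by positivity
  have hs2 : √(d : ℝ) ^ 2 = d := sq_sqrt (by positivity)
  have key : ∀ (u : V → ℝ) (g : V → ℤ) (k : ℕ), (∀ z, √d ^ k * u z = g z) →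
      ∀ z, √d ^ (k + 1) * Td d G u z = ((∑ y ∈ G.neighborFinset z, g y : ℤ) : ℝ) := by
    intro u g k h z
    rw [Td_apply, pow_succ]
    push_cast
    simp only [← h, ← Finset.mul_sum]
    field_simp
  induction n using Nat.strong_induction_on with
  | _ n ih =>
    match n, ih with
    | 0, _ => exact ⟨f, by simp [geron]⟩
    | 1, _ =>
      have h1 := key (fun y => (f y : ℝ)) f 0 (by simp)
      exact ⟨_, fun z => by simpa only [geron, aeval_X, zero_add] using h1 z⟩
    | 2, _ =>
      have h1 := key (fun y => (f y : ℝ)) f 0 (by simp)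
      have h2 := key _ _ _ h1
      refine ⟨fun z => ∑ y ∈ G.neighborFinset z, ∑ y' ∈ G.neighborFinset y, f y' - (d + 1) * f z,
        fun z => ?_⟩
      · have := h2 z
        simp only [geron, map_sub, map_pow, aeval_X, aeval_C, LinearMap.sub_apply,
          Module.algebraMap_end_apply, Pi.sub_apply, Pi.smul_apply, smul_eq_mul, mul_sub, sq (Td d G),
          Module.End.mul_apply]
        rw [Int.cast_sub, ← this, hs2]
        push_cast
        field_simp
    | n + 3, ih =>
      obtain ⟨g1, h1⟩ := ih (n + 1) (by omega)
      obtain ⟨g2, h2⟩ := ih (n + 2) (by omega)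
      have h3 := key _ _ _ h2
      refine ⟨fun z => ∑ y ∈ G.neighborFinset z, g2 y - d * g1 z, fun z => ?_⟩
      rw [Int.cast_sub, ← h3 z]
      push_cast
      rw [← h1 z]
      simp only [geron, map_sub, map_mul, aeval_X, LinearMap.sub_apply, Module.End.mul_apply,
        Pi.sub_apply]
      linear_combination
        (-√d ^ (n + 1) * aeval (Td d G) (geron d (n + 1)) (fun y => (f y : ℝ)) z) * hs2

/-- For `H = h(T_d)` and a normalized eigenfunction `φ`,
`h(lam)² ⟨f, φ⟩² = ⟨H f, φ⟩² ≤ ‖H f‖² = ⟨f, H² f⟩`. -/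
theorem eigen_sq_le (h : ℝ[X]) (f φ : V → ℝ) (lam : ℝ) (hφ : Td d G φ = lam • φ)
    (hn : ∑ x, φ x ^ 2 = 1) :
    h.eval lam ^ 2 * (∑ z, f z * φ z) ^ 2 ≤ ∑ z, f z * aeval (Td d G) (h ^ 2) f z := by
  have e1 : ∑ z, f z * aeval (Td d G) (h ^ 2) f z = ∑ z, (aeval (Td d G) h f z) ^ 2 := by
    rw [sq, map_mul, Module.End.mul_apply, aeval_Td_symm]
    simp only [sq]
  have e2 : h.eval lam * ∑ z, f z * φ z = ∑ z, aeval (Td d G) h f z * φ z := by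
    rw [← aeval_Td_symm, aeval_Td_eigen G d h hφ, Finset.mul_sum]
    exact Finset.sum_congr rfl fun z _ => by simp only [Pi.smul_apply, smul_eq_mul]; ring
  rw [← mul_pow, e1, e2]
  refine (Finset.sum_mul_sq_le_sq_mul_sq _ _ _).trans_eq ?_
  rw [hn, mul_one]

variable [DecidableEq V]

theorem aeval_Td_expand (p : ℝ[X]) (f : V → ℝ) (z : V) :
    aeval (Td d G) p f z
      = ∑ x, f x * aeval (Td d G) p (fun y => if y = x then (1 : ℝ) else 0) z := by
  have hf : f = ∑ x, f x • (fun y => if y = x then (1 : ℝ) else 0) := by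
    funext y; simp
  conv_lhs => rw [hf]
  simp only [map_sum, map_smul, Finset.sum_apply, Pi.smul_apply, smul_eq_mul]

/-- A matrix with entries at most `M` has quadratic form at most `M |E| ‖f‖₂²` on functions
supported on `E`. -/
theorem quadratic_form_le (p : ℝ[X]) (f : V → ℝ) (E : Finset V) (hE : ∀ x, x ∉ E → f x = 0) (M : ℝ)
    (hM : ∀ x z, |aeval (Td d G) p (fun y => if y = x then (1 : ℝ) else 0) z| ≤ M) (hM0 : 0 ≤ M) :
    ∑ z, f z * aeval (Td d G) p f z ≤ M * E.card * ∑ z, f z ^ 2 := by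
  have h1 : ∑ z, |f z| = ∑ z ∈ E, |f z| :=
    (Finset.sum_subset (Finset.subset_univ E) fun x _ hx => by simp [hE x hx]).symm
  have h2 : ∑ z, f z ^ 2 = ∑ z ∈ E, |f z| ^ 2 := by
    simp only [sq_abs]
    exact (Finset.sum_subset (Finset.subset_univ E) fun x _ hx => by simp [hE x hx]).symm
  calc ∑ z, f z * aeval (Td d G) p f z
      ≤ ∑ z, |f z| * (M * ∑ x, |f x|) := by
        refine Finset.sum_le_sum fun z _ => (le_abs_self _).trans ?_
        rw [abs_mul, aeval_Td_expand]
        gcongr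
        refine (Finset.abs_sum_le_sum_abs _ _).trans ?_
        rw [Finset.mul_sum]
        refine Finset.sum_le_sum fun x _ => ?_
        rw [abs_mul, mul_comm]
        gcongr
        exact hM x z
    _ = M * (∑ z ∈ E, |f z|) ^ 2 := by rw [← Finset.sum_mul, h1]; ring
    _ ≤ M * (E.card * ∑ z ∈ E, |f z| ^ 2) := by gcongr; exact sq_sum_le_card_mul_sum_sq
    _ = _ := by rw [h2]; ring

/-- Some entry of `p_n(T_d)` is at least `d^{-n/2}`: the entries of `d^{n/2} p_n(T_d)` are integers,
and they do not all vanish because `p_n(T_d)` does not kill the constants. -/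
theorem exists_lpNorm_ge [Nonempty V] (hd : 0 < d) (hG : G.IsRegularOfDegree (d + 1)) (n : ℕ)
    (hn : 0 < n) :
    ∃ x : V, (√d ^ n)⁻¹ ≤
      lpNorm ∞ (aeval (Td d G) (geron d n) (fun y => if y = x then (1 : ℝ) else 0)) := by
  have hs : 0 < √(d : ℝ) := by positivity
  by_contra! hlt
  have hz : ∀ x z, aeval (Td d G) (geron d n) (fun y => if y = x then (1 : ℝ) else 0) z = 0 := by
    intro x z
    obtain ⟨g, hg⟩ := geron_integral G d hd (fun y => if y = x then 1 else 0) n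
    have h1 := hg z
    have h2 := (abs_le_lpNorm_top _ z).trans_lt (hlt x)
    push_cast at h1
    have h3 : |(g z : ℝ)| < 1 := by
      rw [← h1, abs_mul, abs_of_pos (pow_pos hs n)]
      calc _ < √d ^ n * (√d ^ n)⁻¹ := by gcongr
        _ = 1 := mul_inv_cancel₀ (by positivity)
    have h4 : g z = 0 := Int.abs_lt_one_iff.1 (by exact_mod_cast h3)
    rw [h4, Int.cast_zero] at h1
    exact (mul_eq_zero.1 h1).resolve_left (by positivity)
  have htop : Td d G (fun _ => 1) = ((√d)⁻¹ * (d + 1)) • (fun _ => (1 : ℝ)) := by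
    funext x
    rw [Td_apply]
    simp [hG x]
  obtain ⟨z⟩ := ‹Nonempty V›
  have h := congrFun (aeval_Td_eigen G d (geron d n) htop) z
  rw [aeval_Td_expand] at h
  simp only [hz, mul_zero, Finset.sum_const_zero, Pi.smul_apply, smul_eq_mul, mul_one] at h
  obtain ⟨m, rfl⟩ : ∃ m, n = m + 1 := ⟨n - 1, by omega⟩
  rw [geron_eval_top d hd] at h
  exact absurd h (by positivity)

/-- The spectral inequality for the Fejér kernel: if the operators `C_{2jm}(T_d)`, `1 ≤ j ≤ r`, have
entries at most `M` while their eigenvalues at `φ` are at least `1`, then a set `E` carrying mass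
`ε ≥ 2 / r` satisfies `2 ε ≤ r M |E|`. -/
theorem card_lower_bound (φ : V → ℝ) (lam : ℝ) (hφ : Td d G φ = lam • φ) (hn : ∑ x, φ x ^ 2 = 1)
    (E : Finset V) (ε : ℝ) (hε : 0 < ε) (hE : ε < ∑ x ∈ E, φ x ^ 2) (r m : ℕ) (hr : 2 ≤ r * ε)
    (hlam : ∀ j < r, 1 ≤ (Chebyshev.C ℝ (2 * ((j : ℤ) + 1) * m)).eval lam) (M : ℝ) (hM0 : 0 ≤ M)
    (hM : ∀ j < r, ∀ x z, |aeval (Td d G) (Chebyshev.C ℝ (2 * ((j : ℤ) + 1) * m))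
      (fun y => if y = x then (1 : ℝ) else 0) z| ≤ M) :
    2 * ε ≤ r * M * E.card := by
  set f : V → ℝ := fun x => if x ∈ E then φ x else 0 with hf
  set μ := ∑ x ∈ E, φ x ^ 2 with hμ
  have hfφ : ∑ z, f z * φ z = μ := by
    simp [hf, hμ, ite_mul, sq]
  have hff : ∑ z, f z ^ 2 = μ := by
    simp [hf, hμ, ite_pow]
  have hμ0 : 0 < μ := hε.trans hE
  -- `D` is the total number of oscillating terms of the Fejér kernel.
  set D : ℝ := ∑ s ∈ range (r + 1), ∑ j ∈ range s, (1 : ℝ) with hD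
  have hDr : 2 * D = r * (r + 1) := by
    have := Finset.sum_range_id_mul_two (r + 1)
    simp only [hD, Finset.sum_const, Finset.card_range, nsmul_eq_mul, mul_one]
    rw [mul_comm, ← Nat.cast_sum]
    norm_cast
    rw [this]; simp [mul_comm]
  have key := eigen_sq_le G d ((Chebyshev.S ℝ r).comp (Chebyshev.C ℝ m)) f φ lam hφ hn
  have hlow : (r : ℝ) + 1 + D ≤ ((Chebyshev.S ℝ r).comp (Chebyshev.C ℝ m)).eval lam ^ 2 := by
    rw [← eval_pow, cheb_fejer_comp]
    simp only [eval_add, eval_natCast, eval_one, eval_finsetSum]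
    refine add_le_add le_rfl (Finset.sum_le_sum fun s hs => Finset.sum_le_sum fun j hj => ?_)
    simp only [Finset.mem_range] at hs hj
    exact hlam j (by omega)
  have hup : ∑ z, f z * aeval (Td d G) (((Chebyshev.S ℝ r).comp (Chebyshev.C ℝ m)) ^ 2) f z
      ≤ (r + 1) * μ + D * (M * E.card * μ) := by
    have hterm : ∀ s ∈ range (r + 1), ∀ j ∈ range s,
        ∑ z, f z * aeval (Td d G) (Chebyshev.C ℝ (2 * ((j : ℤ) + 1) * m)) f z
          ≤ 1 * (M * E.card * μ) := by
      intro s hs j hj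
      simp only [Finset.mem_range] at hs hj
      rw [one_mul, ← hff]
      exact quadratic_form_le G d _ f E (fun x hx => by simp [hf, hx]) M (hM j (by omega)) hM0
    have hsplit : ∑ z, f z * aeval (Td d G) (((Chebyshev.S ℝ r).comp (Chebyshev.C ℝ m)) ^ 2) f z
        = (r + 1) * μ + ∑ s ∈ range (r + 1), ∑ j ∈ range s,
          ∑ z, f z * aeval (Td d G) (Chebyshev.C ℝ (2 * ((j : ℤ) + 1) * m)) f z := by
      let Q : ℝ[X] →ₗ[ℝ] ℝ :=
        { toFun := fun p => ∑ z, f z * aeval (Td d G) p f z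
          map_add' := fun p q => by simp [mul_add, Finset.sum_add_distrib]
          map_smul' := fun a p => by
            simp only [map_smul, LinearMap.smul_apply, Pi.smul_apply, smul_eq_mul, RingHom.id_apply,
              Finset.mul_sum]
            exact Finset.sum_congr rfl fun _ _ => by ring }
      have hQ : ∀ p, Q p = ∑ z, f z * aeval (Td d G) p f z := fun _ => rfl
      have hQ1 : Q 1 = μ := by rw [hQ, ← hff]; simp [sq]
      have h1 : ((r : ℝ[X]) + 1) = ((r : ℝ) + 1) • 1 := by
        rw [smul_eq_C_mul]; simp
      simp only [← hQ]
      rw [cheb_fejer_comp, map_add, h1, map_smul, hQ1, smul_eq_mul]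
      simp only [map_sum]
    rw [hsplit, hD, Finset.sum_mul]
    refine add_le_add le_rfl (Finset.sum_le_sum fun s hs => ?_)
    rw [Finset.sum_mul]
    exact Finset.sum_le_sum (hterm s hs)
  rw [hfφ] at key
  exact card_arith ε hε μ hE r (Nat.cast_nonneg r) hr D hDr M _ _ _ hlow key hup

end Graph

/-! ### Delocalization -/

/-- For `α ≥ 1` the hypothesis bounds `N`: by integrality `d^{-N/2} ≤ C d^{-α N}`, hence
`d^{δ N} ≤ d^{(α - 1/2) N} ≤ C`. -/
theorem delocalization_large
    (C : ℝ) (hC : 0 < C) (α : ℝ) (hα : 1 ≤ α) (ε : ℝ) (hε : ε ∈ Set.Ioo (0 : ℝ) 1)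
    (d : ℕ) (hd : 2 ≤ d) :
    ∃ c : ℝ, 0 < c ∧
      ∀ (N : ℕ), 0 < N →
      ∀ (V : Type) (_ : Fintype V) (_ : DecidableEq V) (G : SimpleGraph V) (_ : DecidableRel G.Adj),
        G.IsRegularOfDegree (d + 1) →
        (∀ n : ℕ, n ≤ N → ∀ x : V,
          lpNorm ∞ (aeval (Td d G) (geron d n) (fun y => if y = x then (1 : ℝ) else 0))
            ≤ C * (d : ℝ) ^ (-(α * n))) →
        ∀ (φ : V → ℝ) (lam : ℝ), Td d G φ = lam • φ → lpNorm 2 φ = 1 →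
        ∀ E : Finset V, ε < ∑ x ∈ E, (φ x) ^ 2 →
          c * (d : ℝ) ^ ((2 ^ (7 : ℕ) : ℝ)⁻¹ * (α * ε ^ 2) * N) ≤ (E.card : ℝ) := by
  refine ⟨C⁻¹, inv_pos.2 hC, fun N hN V _ _ G _ hG hS φ lam _ hφ E hE => ?_⟩
  have hd0 : 0 < d := by omega
  have hd1 : (1 : ℝ) ≤ d := by exact_mod_cast hd0
  have hdp : (0 : ℝ) < d := by positivity
  have hEne : E.Nonempty := by
    rw [Finset.nonempty_iff_ne_empty]
    rintro rfl
    simp only [Finset.sum_empty] at hE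
    linarith [hε.1]
  have hcard : (1 : ℝ) ≤ E.card := by exact_mod_cast hEne.card_pos
  have : Nonempty V := hEne.to_type
  obtain ⟨x, hx⟩ := exists_lpNorm_ge G d hd0 hG N hN
  have h := hx.trans (hS N le_rfl x)
  have hsq : (√(d : ℝ) ^ N)⁻¹ = (d : ℝ) ^ (-((1 / 2 : ℝ) * N)) := by
    rw [rpow_neg hdp.le, rpow_mul hdp.le, ← sqrt_eq_rpow, Real.rpow_natCast]
  rw [hsq] at h
  have h1 : (d : ℝ) ^ ((α - 1 / 2) * N) ≤ C := by
    calc (d : ℝ) ^ ((α - 1 / 2) * N)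
        = (d : ℝ) ^ (-((1 / 2 : ℝ) * N)) * (d : ℝ) ^ (α * N) := by
          rw [← rpow_add hdp]; ring_nf
      _ ≤ C * (d : ℝ) ^ (-(α * N)) * (d : ℝ) ^ (α * N) := by gcongr
      _ = C := by rw [mul_assoc, ← rpow_add hdp]; simp
  have hε2 : ε ^ 2 ≤ 1 := pow_le_one₀ hε.1.le hε.2.le
  have h2 : (d : ℝ) ^ ((2 ^ (7 : ℕ) : ℝ)⁻¹ * (α * ε ^ 2) * N) ≤ (d : ℝ) ^ ((α - 1 / 2) * N) := by
    apply rpow_le_rpow_of_exponent_le hd1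
    gcongr
    norm_num
    nlinarith
  calc C⁻¹ * (d : ℝ) ^ ((2 ^ (7 : ℕ) : ℝ)⁻¹ * (α * ε ^ 2) * N) ≤ C⁻¹ * C := by
        gcongr; exact h2.trans h1
    _ = 1 := inv_mul_cancel₀ hC.ne'
    _ ≤ _ := hcard

/-- The case `α < 1`. The decay rate `d^{-α}` of the spheres is relaxed to `ρ = d^{-α/2}`, for which
`d ρ² = d^{1-α} > 1`, so that `cheb_C_bound` applies. -/
theorem delocalization_small
    (C : ℝ) (hC : 0 < C) (α : ℝ) (hα : 0 < α) (hα1 : α < 1) (ε : ℝ) (hε : ε ∈ Set.Ioo (0 : ℝ) 1)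
    (d : ℕ) (hd : 2 ≤ d) :
    ∃ c : ℝ, 0 < c ∧
      ∀ (N : ℕ), 0 < N →
      ∀ (V : Type) (_ : Fintype V) (_ : DecidableEq V) (G : SimpleGraph V) (_ : DecidableRel G.Adj),
        G.IsRegularOfDegree (d + 1) →
        (∀ n : ℕ, n ≤ N → ∀ x : V,
          lpNorm ∞ (aeval (Td d G) (geron d n) (fun y => if y = x then (1 : ℝ) else 0))
            ≤ C * (d : ℝ) ^ (-(α * n))) →
        ∀ (φ : V → ℝ) (lam : ℝ), Td d G φ = lam • φ → lpNorm 2 φ = 1 →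
        ∀ E : Finset V, ε < ∑ x ∈ E, (φ x) ^ 2 →
          c * (d : ℝ) ^ ((2 ^ (7 : ℕ) : ℝ)⁻¹ * (α * ε ^ 2) * N) ≤ (E.card : ℝ) := by
  obtain ⟨hε0, hε1⟩ := hε
  have hd0 : 0 < d := by omega
  have hd1 : (1 : ℝ) < d := by exact_mod_cast (by omega : 1 < d)
  have hdp : (0 : ℝ) < d := by positivity
  set r : ℕ := ⌈2 / ε⌉₊ with hrdef
  have hr2 : 2 ≤ (r : ℝ) * ε := (div_le_iff₀ hε0).1 (Nat.le_ceil _)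
  have hr3 : (r : ℝ) * ε ≤ 3 := by
    have h := (Nat.ceil_lt_add_one (by positivity : 0 ≤ 2 / ε)).le
    have := mul_le_mul_of_nonneg_right h hε0.le
    rw [add_mul, div_mul_cancel₀ _ hε0.ne'] at this
    linarith
  have hrp : (0 : ℝ) < r := by
    by_contra! h
    nlinarith
  have hr0 : 0 < r := by exact_mod_cast hrp
  set ρ : ℝ := (d : ℝ) ^ (-(α / 2)) with hρdef
  have hρ : 0 < ρ := rpow_pos_of_pos hdp _
  have hρ1 : ρ ≤ 1 := rpow_le_one_of_one_le_of_nonpos hd1.le (by linarith)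
  have hρn : ∀ n : ℕ, ρ ^ n = (d : ℝ) ^ (-(α / 2) * n) := fun n => by
    rw [hρdef, rpow_mul hdp.le, Real.rpow_natCast]
  set κ : ℝ := d * ρ ^ 2 with hκdef
  have hκ : 1 < κ := by
    have : κ = (d : ℝ) ^ (1 - α) := by
      rw [hκdef, hρn 2, ← rpow_one_add' hdp.le (by push_cast; linarith)]
      push_cast; ring_nf
    rw [this]
    exact one_lt_rpow hd1 (by linarith)
  set B : ℝ := C * κ / (κ - 1) with hBdef
  have hκ1 : 0 < κ - 1 := by linarith
  have hB : 0 < B := by positivity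
  have hCB : C + B / κ ≤ B := by
    rw [hBdef]
    apply le_of_eq
    field_simp
    ring
  set B' : ℝ := B * (2 + (ρ ^ 2)⁻¹) with hB'def
  have hB' : 0 < B' := by positivity
  refine ⟨2 * ε / (r * B' * (d : ℝ) ^ α), by positivity, ?_⟩
  intro N hN V _ _ G _ hG hS φ lam hlam hφ E hE
  set m : ℕ := N / (14 * r ^ 2) with hm
  have hmN : 14 * r ^ 2 * m ≤ N := Nat.mul_div_le _ _
  have hNm : N < 14 * r ^ 2 * (m + 1) := Nat.lt_mul_div_succ N (by positivity)
  obtain ⟨k, hk0, hk, hfreq⟩ := exists_frequency lam r hr0 m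
  have hM : ∀ j < r, ∀ x z, |aeval (Td d G) (Chebyshev.C ℝ (2 * ((j : ℤ) + 1) * ((m * k : ℕ) : ℤ)))
      (fun y => if y = x then (1 : ℝ) else 0) z| ≤ B' * ρ ^ (2 * m) := by
    intro j hj x z
    let L : ℝ[X] →ₗ[ℝ] ℝ :=
      { toFun := fun p => aeval (Td d G) p (fun y => if y = x then (1 : ℝ) else 0) z
        map_add' := fun p q => by simp
        map_smul' := fun a p => by simp }
    have hLb : ∀ n ≤ N, |L (geron d n)| ≤ C * ρ ^ n := by
      intro n hn
      refine (abs_le_lpNorm_top _ z).trans ((hS n hn x).trans ?_)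
      rw [hρn]
      have hn0 : (0 : ℝ) ≤ n := by positivity
      refine mul_le_mul_of_nonneg_left (rpow_le_rpow_of_exponent_le hd1.le ?_) hC.le
      nlinarith [mul_nonneg hα.le hn0]
    have hn : 2 * (j + 1) * (m * k) ≤ N := by
      calc 2 * (j + 1) * (m * k) ≤ 2 * r * (m * (7 * r)) := by gcongr; omega
        _ = 14 * r ^ 2 * m := by ring
        _ ≤ N := hmN
    have h := cheb_C_bound d hd0 L N C B ρ hρ hB.le hCB hLb (2 * (j + 1) * (m * k)) hn
    have hcast : ((2 * (j + 1) * (m * k) : ℕ) : ℤ) = 2 * ((j : ℤ) + 1) * ((m * k : ℕ) : ℤ) := by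
      push_cast; ring
    rw [hcast] at h
    refine h.trans ?_
    refine mul_le_mul_of_nonneg_left (pow_le_pow_of_le_one hρ.le hρ1 ?_) hB'.le
    calc 2 * m = 2 * 1 * (m * 1) := by ring
      _ ≤ 2 * (j + 1) * (m * k) := by gcongr <;> omega
  have hfin := card_lower_bound G d φ lam hlam (sum_sq_of_lpNorm_two hφ) E ε hε0 hE r (m * k) hr2
    hfreq (B' * ρ ^ (2 * m)) (by positivity) hM
  set δN : ℝ := (2 ^ (7 : ℕ) : ℝ)⁻¹ * (α * ε ^ 2) * N with hδ
  -- `14 r² ≤ 126 / ε²`, so the exponent `α m` exceeds `α ε² N / 128` up to an additive `α`.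
  have hexp : δN ≤ α * (m + 1) := by
    have h1 : (N : ℝ) ≤ 14 * (r : ℝ) ^ 2 * (m + 1) := by exact_mod_cast hNm.le
    have h2 : ((r : ℝ) * ε) ^ 2 ≤ 9 := by nlinarith
    have h3 : ε ^ 2 * N ≤ 126 * ((m : ℝ) + 1) := by
      calc ε ^ 2 * N ≤ ε ^ 2 * (14 * (r : ℝ) ^ 2 * (m + 1)) := by gcongr
        _ = 14 * ((r : ℝ) * ε) ^ 2 * (m + 1) := by ring
        _ ≤ 14 * 9 * ((m : ℝ) + 1) := by gcongr
        _ = _ := by ring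
    have h4 : δN = α * (ε ^ 2 * N / 128) := by rw [hδ]; ring
    rw [h4]
    have hm0 : (0 : ℝ) ≤ m := by positivity
    gcongr
    linarith
  have hpow : ρ ^ (2 * m) * (d : ℝ) ^ δN ≤ (d : ℝ) ^ α := by
    rw [hρn, ← rpow_add hdp]
    apply rpow_le_rpow_of_exponent_le hd1.le
    push_cast
    linarith
  rw [div_mul_eq_mul_div, div_le_iff₀ (by positivity)]
  calc 2 * ε * (d : ℝ) ^ δN ≤ r * (B' * ρ ^ (2 * m)) * E.card * (d : ℝ) ^ δN := by gcongr
    _ = r * B' * E.card * (ρ ^ (2 * m) * (d : ℝ) ^ δN) := by ring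
    _ ≤ r * B' * E.card * (d : ℝ) ^ α := by gcongr
    _ = _ := by ring

/-- **Theorem 1** (Brooks–Lindenstrauss, delocalization of eigenfunctions on large regular
graphs, pointwise/`L^∞` form of condition (1)). If `sup_x ‖S_n δ_x‖_∞ ≤ C d^{-α n}` for all
`n ≤ N`, then any set `E` carrying more than `ε` of the `L²` mass of an `L²`-normalized
eigenfunction of `T_d` satisfies `|E| ≥ c d^{δ N}` with `δ = 2⁻⁷ α ε²`. -/
theorem delocalization_pointwise
    (C : ℝ) (hC : 0 < C) (α : ℝ) (hα : 0 < α) (ε : ℝ) (hε : ε ∈ Set.Ioo (0 : ℝ) 1)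
    (d : ℕ) (hd : 2 ≤ d) :
    ∃ c : ℝ, 0 < c ∧
      ∀ (N : ℕ), 0 < N →
      ∀ (V : Type) (_ : Fintype V) (_ : DecidableEq V) (G : SimpleGraph V) (_ : DecidableRel G.Adj),
        G.IsRegularOfDegree (d + 1) →
        (∀ n : ℕ, n ≤ N → ∀ x : V,
          lpNorm ∞ (aeval (Td d G) (geron d n) (fun y => if y = x then (1 : ℝ) else 0))
            ≤ C * (d : ℝ) ^ (-(α * n))) →
        ∀ (φ : V → ℝ) (lam : ℝ), Td d G φ = lam • φ → lpNorm 2 φ = 1 →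
        ∀ E : Finset V, ε < ∑ x ∈ E, (φ x) ^ 2 →
          c * (d : ℝ) ^ ((2 ^ (7 : ℕ) : ℝ)⁻¹ * (α * ε ^ 2) * N) ≤ (E.card : ℝ) := by
  rcases lt_or_ge α 1 with h | h
  · exact delocalization_small C hC α hα h ε hε d hd
  · exact delocalization_large C hC α h ε hε d hd
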